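/- Let δ > 0, c_A > 0, c_B > 0, let Φ be the standard normal cumulative distribution function, Φ̄ = 1 − Φ, and let F be the Hüsler–Reiss bivariate distribution function with parameter δ. If (a_m)_{m} is a sequence of positive reals with m/a_m → 1 as m → ∞, then m · [ 1 − e^{−1/(c_A a_m)} − e^{−1/(c_B a_m)} + F(a_m c_A, a_m c_B) ] converges, as m → ∞, to (1/c_A) Φ̄( log(c_B/c_A)/(2√δ) + √δ ) + (1/c_B) Φ̄( log(c_A/c_B)/(2√δ) + √δ ). In particular, m(1 − e^{−1/(c_A a_m)}) → 1/c_A. -/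

import Mathlib

open MeasureTheory Filter Real

/-- The standard normal cumulative distribution function. -/
noncomputable def stdNormalCDF (x : ℝ) : ℝ :=
  (Real.sqrt (2 * Real.pi))⁻¹ * ∫ t in Set.Iic x, Real.exp (-t ^ 2 / 2)

/-- `Φ̄ = 1 - Φ`. -/
noncomputable def stdNormalTail (x : ℝ) : ℝ := 1 - stdNormalCDF x

/-- The Hüsler–Reiss bivariate distribution function with parameter `δ`. -/
noncomputable def huslerReiss (δ y₁ y₂ : ℝ) : ℝ :=
  Real.exp
    (-(1 / y₁) * stdNormalCDF (Real.log (y₂ / y₁) / (2 * Real.sqrt δ) + Real.sqrt δ)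
      - (1 / y₂) * stdNormalCDF (Real.log (y₁ / y₂) / (2 * Real.sqrt δ) + Real.sqrt δ))

/-!
Both `F` and its margins `y ↦ exp (-1 / y)` are max-stable: multiplying the arguments by `a`
raises the value to the power `1 / a`. Since `m (1 - p ^ (1 / a_m)) → -log p` for every `p > 0`,
each of the two margins and `F` contributes, up to sign, the logarithm of its value at
`(c_A, c_B)`. As `log F (c_A, c_B)` is linear in the two values of `Φ`, these logarithms combine
into the tails `Φ̄`.
-/

theorem exp_neg_one_div_mul (c t : ℝ) :
    Real.exp (-1 / (c * t)) = Real.exp (-1 / c) ^ t⁻¹ := by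
  rw [← Real.exp_mul, ← div_eq_mul_inv, div_div]

section HuslerReiss

variable (δ y₁ y₂ : ℝ)

theorem huslerReiss_pos : 0 < huslerReiss δ y₁ y₂ :=
  Real.exp_pos _

theorem huslerReiss_mul_mul {t : ℝ} (ht : t ≠ 0) :
    huslerReiss δ (t * y₁) (t * y₂) = huslerReiss δ y₁ y₂ ^ t⁻¹ := by
  simp only [huslerReiss, mul_div_mul_left _ _ ht, ← Real.exp_mul, one_div, mul_inv]
  ring_nf

theorem one_div_add_one_div_add_log_huslerReiss :
    1 / y₁ + 1 / y₂ + Real.log (huslerReiss δ y₁ y₂) =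
      (1 / y₁) * stdNormalTail (Real.log (y₂ / y₁) / (2 * Real.sqrt δ) + Real.sqrt δ)
        + (1 / y₂) * stdNormalTail (Real.log (y₁ / y₂) / (2 * Real.sqrt δ) + Real.sqrt δ) := by
  rw [huslerReiss, Real.log_exp, stdNormalTail, stdNormalTail]
  ring

end HuslerReiss

section Asymptotics

variable {ι : Type*} {l : Filter ι} {n a : ι → ℝ} {L : ℝ}

theorem tendsto_mul_one_sub_rpow {t : ι → ℝ} {p : ℝ} (hp : 0 < p)
    (ht : Tendsto t l (nhds 0)) (hnt : Tendsto (fun i => n i * t i) l (nhds L)) :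
    Tendsto (fun i => n i * (1 - p ^ t i)) l (nhds (L * -Real.log p)) := by
  have hderiv : HasDerivAt (fun x : ℝ => 1 - p ^ x) (-Real.log p) 0 := by
    simpa using (hasStrictDerivAt_const_rpow hp 0).hasDerivAt.const_sub 1
  simpa using hderiv.hasFDerivAt.hasFDerivWithinAt.lim ht
    (Eventually.of_forall fun _ => Set.mem_univ _) hnt

theorem tendsto_mul_one_sub_exp_neg_one_div_mul
    (ha : Tendsto a l atTop) (hna : Tendsto (fun i => n i / a i) l (nhds L)) (c : ℝ) :
    Tendsto (fun i => n i * (1 - Real.exp (-1 / (c * a i)))) l (nhds (L * (1 / c))) := by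
  have hlog : -Real.log (Real.exp (-1 / c)) = 1 / c := by
    rw [Real.log_exp, neg_div, neg_neg]
  simpa only [exp_neg_one_div_mul, hlog, Pi.inv_apply] using
    tendsto_mul_one_sub_rpow (Real.exp_pos (-1 / c)) ha.inv_tendsto_atTop hna

theorem tendsto_mul_one_sub_huslerReiss
    (ha : Tendsto a l atTop) (hna : Tendsto (fun i => n i / a i) l (nhds L)) (δ y₁ y₂ : ℝ) :
    Tendsto (fun i => n i * (1 - huslerReiss δ (a i * y₁) (a i * y₂))) l
      (nhds (L * -Real.log (huslerReiss δ y₁ y₂))) := by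
  refine (tendsto_mul_one_sub_rpow (huslerReiss_pos δ y₁ y₂) ha.inv_tendsto_atTop hna).congr' ?_
  filter_upwards [ha.eventually_ne_atTop 0] with i hi
  rw [huslerReiss_mul_mul δ y₁ y₂ hi, Pi.inv_apply]

theorem statement_12_general
    (δ cA cB : ℝ) (_hδ : 0 < δ) (_hcA : 0 < cA) (_hcB : 0 < cB)
    (ha : Tendsto a l atTop) (hna : Tendsto (fun i => n i / a i) l (nhds L)) :
    Tendsto
      (fun i => n i *
        (1 - Real.exp (-1 / (cA * a i)) - Real.exp (-1 / (cB * a i))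
          + huslerReiss δ (a i * cA) (a i * cB)))
      l
      (nhds (L *
        ((1 / cA) * stdNormalTail (Real.log (cB / cA) / (2 * Real.sqrt δ) + Real.sqrt δ)
          + (1 / cB) * stdNormalTail (Real.log (cA / cB) / (2 * Real.sqrt δ) + Real.sqrt δ))))
    ∧ Tendsto (fun i => n i * (1 - Real.exp (-1 / (cA * a i)))) l (nhds (L * (1 / cA))) := by
  have hA := tendsto_mul_one_sub_exp_neg_one_div_mul ha hna cA
  have hB := tendsto_mul_one_sub_exp_neg_one_div_mul ha hna cB
  have hF := tendsto_mul_one_sub_huslerReiss ha hna δ cA cB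
  refine ⟨?_, hA⟩
  rw [← one_div_add_one_div_add_log_huslerReiss]
  convert (hA.add hB).sub hF using 2 <;> ring

end Asymptotics

/-- For `δ, c_A, c_B > 0` and positive reals `a_m` with `m / a_m → 1`,
`m · [1 − e^{−1/(c_A a_m)} − e^{−1/(c_B a_m)} + F(a_m c_A, a_m c_B)]` converges to
`(1/c_A) Φ̄(log(c_B/c_A)/(2√δ) + √δ) + (1/c_B) Φ̄(log(c_A/c_B)/(2√δ) + √δ)`; in particular
`m (1 − e^{−1/(c_A a_m)}) → 1/c_A`. -/
theorem statement_12
    (δ cA cB : ℝ) (hδ : 0 < δ) (hcA : 0 < cA) (hcB : 0 < cB)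
    (a : ℕ → ℝ) (ha_pos : ∀ m, 0 < a m)
    (ha : Tendsto (fun m : ℕ => (m : ℝ) / a m) atTop (nhds 1)) :
    Tendsto
      (fun m : ℕ => (m : ℝ) *
        (1 - Real.exp (-1 / (cA * a m)) - Real.exp (-1 / (cB * a m))
          + huslerReiss δ (a m * cA) (a m * cB)))
      atTop
      (nhds
        ((1 / cA) * stdNormalTail (Real.log (cB / cA) / (2 * Real.sqrt δ) + Real.sqrt δ)
          + (1 / cB) * stdNormalTail (Real.log (cA / cB) / (2 * Real.sqrt δ) + Real.sqrt δ)))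
    ∧ Tendsto (fun m : ℕ => (m : ℝ) * (1 - Real.exp (-1 / (cA * a m))))
        atTop (nhds (1 / cA)) := by
  simpa only [one_mul] using statement_12_general δ cA cB hδ hcA hcB
    ((Asymptotics.isEquivalent_of_tendsto_one ha).tendsto_atTop tendsto_natCast_atTop_atTop) ha
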